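/- For i, j ≥ 1, the number of synchronized Tamari intervals with exactly i canopy entries equal to 1 and j canopy entries equal to 0 equals (1/(ij)) · C(2i+j-2, j-1) · C(2j+i-2, i-1). -/

import Mathlib

/-- Binary trees: a leaf or a binary node with two subtrees. -/
inductive BT : Type
  | leaf : BT
  | node : BT → BT → BT

namespace BT

/-- Number of binary (internal) nodes. -/
def size : BT → ℕ
  | leaf => 0
  | node l r => l.size + r.size + 1

/-- One right rotation somewhere in the tree: ((A,B),C) ↦ (A,(B,C)). -/
inductive Rot : BT → BT → Prop
  | rotate (A B C : BT) : Rot (node (node A B) C) (node A (node B C))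
  | left {l l' : BT} (r : BT) : Rot l l' → Rot (node l r) (node l' r)
  | right (l : BT) {r r' : BT} : Rot r r' → Rot (node l r) (node l r')

/-- Tamari order: reflexive-transitive closure of right rotation. -/
def tle (T T' : BT) : Prop := Relation.ReflTransGen Rot T T'

/-- Bracket-vector: sizes of right subtrees of nodes, in infix order. -/
def bracket : BT → List ℕ
  | leaf => []
  | node l r => bracket l ++ r.size :: bracket r

/-- Dual bracket-vector: sizes of left subtrees of nodes, in infix order. -/
def dualBracket : BT → List ℕ
  | leaf => []
  | node l r => dualBracket l ++ l.size :: dualBracket r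

/-- Canopy word: for each leaf (left to right), 1 if it is a left child, 0 if a right child;
the argument `b` is the value assigned to the tree if it is itself a leaf. -/
def canopyAux (b : ℕ) : BT → List ℕ
  | leaf => [b]
  | node l r => canopyAux 1 l ++ canopyAux 0 r

/-- Canopy-vector of a binary tree. -/
def canopy (T : BT) : List ℕ := canopyAux 1 T

/-- Left-right mirror. -/
def mir : BT → BT
  | leaf => leaf
  | node l r => node (mir r) (mir l)

/-- Tamari interval of size n. -/
def interval (p : BT × BT) (n : ℕ) : Prop :=
  p.1.size = n ∧ p.2.size = n ∧ tle p.1 p.2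

/-- Tamari interval (of unspecified size). -/
def isInt (p : BT × BT) : Prop := p.1.size = p.2.size ∧ tle p.1 p.2

/-- The rise operation (T,T') ↦ ((T,ε),(ε,T')). -/
def riseF (p : BT × BT) : BT × BT := (node p.1 leaf, node leaf p.2)

/-- An interval is modern when its rise is again an interval. -/
def modern (p : BT × BT) : Prop := tle (node p.1 leaf) (node leaf p.2)

/-- Infinitely modern: every iterated rise is an interval. -/
def infModern (p : BT × BT) : Prop :=
  ∀ k : ℕ, tle ((riseF^[k] p).1) ((riseF^[k] p).2)

/-- Synchronized: equal canopies. -/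
def synced (p : BT × BT) : Prop := canopy p.1 = canopy p.2

/-- Self-dual: equal to its dual (mir T', mir T). -/
def selfDual (p : BT × BT) : Prop := mir p.2 = p.1 ∧ mir p.1 = p.2

/-- Number of positions where the two canopies agree. -/
def agreeCount (p : BT × BT) : ℕ :=
  ((List.range (p.1.size + 1)).filter
    (fun i => (canopy p.1).getD i 0 == (canopy p.2).getD i 0)).length

/-- Number of canopy positions of joint type (a on top, b on bottom), for an interval (T,T')
with T' the upper tree. -/
def typeCount (a b : ℕ) (p : BT × BT) : ℕ :=
  ((List.range (p.1.size + 1)).filter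
    (fun i => ((canopy p.2).getD i 0 == a) && ((canopy p.1).getD i 0 == b))).length

end BT

namespace BT

/-- Number of nodes on the left branch. -/
def lb : BT → ℕ
  | leaf => 0
  | node l _ => l.lb + 1

/-- Insert a node with left subtree `A` on the left branch of a tree, at depth `d`. -/
def ins (A : BT) : BT → ℕ → BT
  | B, 0 => node A B
  | leaf, _ + 1 => node A leaf
  | node l r, d + 1 => node (ins A l d) r

theorem ins_zero (A B : BT) : ins A B 0 = node A B := by cases B <;> rfl

theorem ins_node (A l r : BT) (d : ℕ) : ins A (node l r) (d + 1) = node (ins A l d) r := rfl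

theorem Rot.size_eq {T T' : BT} (h : Rot T T') : T.size = T'.size := by
  induction h <;> simp only [size] at * <;> omega

theorem tle.size_eq {T T' : BT} (h : tle T T') : T.size = T'.size := by
  induction h with
  | refl => rfl
  | tail _ h ih => exact ih.trans h.size_eq

theorem tle.node_left {l l' : BT} (r : BT) (h : tle l l') : tle (node l r) (node l' r) :=
  Relation.ReflTransGen.lift (fun l => node l r) (fun _ _ h => Rot.left r h) _ _ h

theorem tle.node_right (l : BT) {r r' : BT} (h : tle r r') : tle (node l r) (node l r') :=
  Relation.ReflTransGen.lift (fun r => node l r) (fun _ _ h => Rot.right l h) _ _ h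

theorem ins_tle (A : BT) : ∀ (d : ℕ) (B : BT), d ≤ lb B → tle (ins A B d) (node A B)
  | 0, B, _ => by rw [ins_zero]; exact Relation.ReflTransGen.refl
  | d + 1, leaf, h => by simp [lb] at h
  | d + 1, node l r, h => by
    have := ins_tle A d l (by simp [lb] at h; omega)
    rw [ins_node]
    exact (this.node_left r).trans (Relation.ReflTransGen.single (Rot.rotate A l r))

theorem rot_ins (A : BT) : ∀ (d : ℕ) (B T : BT), d ≤ lb B → Rot T (ins A B d) →
    ∃ A' B' d', d' ≤ lb B' ∧ T = ins A' B' d' ∧ tle A' A ∧ tle B' B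
  | 0, B, T, _, h => by
    rw [ins_zero] at h
    cases h with
    | rotate _ B1 C =>
      exact ⟨A, node B1 C, 1, by simp [lb], by rw [ins_node, ins_zero],
        Relation.ReflTransGen.refl, Relation.ReflTransGen.refl⟩
    | @left l _ _ h =>
      exact ⟨l, B, 0, by simp, by rw [ins_zero], Relation.ReflTransGen.single h,
        Relation.ReflTransGen.refl⟩
    | @right _ r _ h =>
      exact ⟨A, r, 0, by simp, by rw [ins_zero], Relation.ReflTransGen.refl,
        Relation.ReflTransGen.single h⟩
  | d + 1, leaf, T, h, _ => by simp [lb] at h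
  | d + 1, node l r, T, hd, h => by
    rw [ins_node] at h
    have hd' : d ≤ lb l := by simp [lb] at hd; omega
    cases h with
    | rotate _ B1 C =>
      exact ⟨A, node (node l B1) C, d + 2, by simp [lb]; omega, by rw [ins_node, ins_node],
        Relation.ReflTransGen.refl, Relation.ReflTransGen.single (Rot.rotate _ _ _)⟩
    | @left l0 _ _ h =>
      obtain ⟨A', B', d', h1, h2, h3, h4⟩ := rot_ins A d l l0 hd' h
      exact ⟨A', node B' r, d' + 1, by simp [lb]; omega, by rw [ins_node, h2], h3, h4.node_left r⟩
    | @right _ r0 _ h =>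
      exact ⟨A, node l r0, d + 1, by simp [lb]; omega, by rw [ins_node],
        Relation.ReflTransGen.refl, tle.node_right l (Relation.ReflTransGen.single h)⟩

theorem tle_node_iff (T L R : BT) : tle T (node L R) ↔
    ∃ A B d, d ≤ lb B ∧ T = ins A B d ∧ tle A L ∧ tle B R := by
  constructor
  · intro h
    unfold tle at h
    induction h using Relation.ReflTransGen.head_induction_on with
    | refl => exact ⟨L, R, 0, by simp, by rw [ins_zero], Relation.ReflTransGen.refl,
        Relation.ReflTransGen.refl⟩
    | head h _ ih =>
      obtain ⟨A, B, d, h1, rfl, h3, h4⟩ := ih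
      obtain ⟨A', B', d', h1', h2', h3', h4'⟩ := rot_ins A d B _ h1 h
      exact ⟨A', B', d', h1', h2', h3'.trans h3, h4'.trans h4⟩
  · rintro ⟨A, B, d, h1, rfl, h3, h4⟩
    exact (ins_tle A d B h1).trans ((h3.node_left B).trans (tle.node_right L h4))

theorem size_ins (A : BT) : ∀ (d : ℕ) (B : BT), d ≤ lb B → (ins A B d).size = A.size + B.size + 1
  | 0, B, _ => by rw [ins_zero]; rfl
  | d + 1, leaf, h => by simp [lb] at h
  | d + 1, node l r, h => by
    have := size_ins A d l (by simp [lb] at h; omega)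
    simp only [ins_node, size, this]; omega

theorem lb_ins (A : BT) : ∀ (d : ℕ) (B : BT), d ≤ lb B → lb (ins A B d) = lb A + 1 + d
  | 0, B, _ => by rw [ins_zero]; rfl
  | d + 1, leaf, h => by simp [lb] at h
  | d + 1, node l r, h => by
    have := lb_ins A d l (by simp [lb] at h; omega)
    simp only [ins_node, lb, this]; omega

theorem ins_inj {A A' : BT} (hA : A.size = A'.size) : ∀ (d d' : ℕ) (B B' : BT), d ≤ lb B →
    d' ≤ lb B' → ins A B d = ins A' B' d' → A = A' ∧ B = B' ∧ d = d'
  | 0, 0, B, B', _, _, h => by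
    rw [ins_zero, ins_zero] at h
    injection h with h1 h2
    exact ⟨h1, h2, rfl⟩
  | 0, d' + 1, B, leaf, _, h', h => by simp [lb] at h'
  | 0, d' + 1, B, node l r, _, h', h => by
    rw [ins_zero, ins_node] at h
    injection h with h1 h2
    have := size_ins A' d' l (by simp [lb] at h'; omega)
    rw [← h1] at this; omega
  | d + 1, _, leaf, _, h', _, h => by simp [lb] at h'
  | d + 1, 0, node l r, B', h', _, h => by
    rw [ins_zero, ins_node] at h
    injection h with h1 h2
    have := size_ins A d l (by simp [lb] at h'; omega)
    rw [h1] at this; omega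
  | d + 1, d' + 1, node l r, leaf, _, h', h => by simp [lb] at h'
  | d + 1, d' + 1, node l r, node l' r', h1, h2, h => by
    rw [ins_node, ins_node] at h
    injection h with h3 h4
    obtain ⟨a, b, c⟩ := ins_inj hA d d' l l' (by simp [lb] at h1; omega)
      (by simp [lb] at h2; omega) h3
    exact ⟨a, by rw [b, h4], by rw [c]⟩

theorem canopyAux_cons : ∀ T : BT, ∃ t, canopyAux 1 T = 1 :: t
  | leaf => ⟨[], rfl⟩
  | node l r => by
    obtain ⟨t, ht⟩ := canopyAux_cons l
    exact ⟨t ++ canopyAux 0 r, by simp [canopyAux, ht]⟩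

theorem canopyAux_length : ∀ (b : ℕ) (T : BT), (canopyAux b T).length = T.size + 1
  | b, leaf => rfl
  | b, node l r => by
    simp only [canopyAux, List.length_append, canopyAux_length, size]; omega

theorem canopyAux_count : ∀ (b : ℕ) (T : BT), (b = 0 ∨ b = 1) →
    (canopyAux b T).count 1 + (canopyAux b T).count 0 = T.size + 1
  | b, leaf, h => by rcases h with rfl | rfl <;> rfl
  | b, node l r, _ => by
    have h1 := canopyAux_count 1 l (by simp)
    have h2 := canopyAux_count 0 r (by simp)
    simp only [canopyAux, List.count_append, size]; omega

theorem canopyAux_ins (A : BT) : ∀ (b d : ℕ) (B : BT), d ≤ lb B → canopyAux b (ins A B d) =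
    canopyAux 1 A ++ (if d < lb B then canopyAux 1 B else 0 :: (canopyAux 1 B).tail)
  | b, 0, leaf, _ => by simp [ins_zero, canopyAux, lb]
  | b, 0, node l r, _ => by simp [ins_zero, canopyAux, lb]
  | b, d + 1, leaf, h => by simp [lb] at h
  | b, d + 1, node l r, h => by
    have := canopyAux_ins A 1 d l (by simp [lb] at h; omega)
    obtain ⟨t, ht⟩ := canopyAux_cons l
    simp only [ins_node, canopyAux, this, lb, Nat.add_lt_add_iff_right]
    split_ifs <;> simp [ht]

/-- Synchronized intervals. -/
def good (p : BT × BT) : Prop := tle p.1 p.2 ∧ canopy p.1 = canopy p.2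

/-- The number of admissible insertion depths. -/
def nd : BT → ℕ
  | leaf => 1
  | node l _ => lb l + 1

/-- Build an interval. -/
def build (p q : BT × BT) (d : ℕ) : BT × BT := (ins p.1 q.1 d, node p.2 q.2)

theorem nd_le {B : BT} {d : ℕ} (h : d < nd B) : d ≤ lb B := by
  cases B <;> simp [nd, lb] at * <;> omega

theorem good_leaf : good (leaf, leaf) := ⟨Relation.ReflTransGen.refl, rfl⟩

theorem size_zero {T : BT} (h : T.size = 0) : T = leaf := by
  cases T <;> simp_all [size]

theorem good_build_iff {p q : BT × BT} {d : ℕ} (hd : d ≤ lb q.1) (hp : tle p.1 p.2)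
    (hq : tle q.1 q.2) : good (build p q d) ↔ good p ∧ good q ∧ d < nd q.1 := by
  obtain ⟨A, L⟩ := p
  obtain ⟨B, R⟩ := q
  simp only at hd hp hq
  have h0 : tle (ins A B d) (node L R) := (tle_node_iff _ _ _).2 ⟨A, B, d, hd, rfl, hp, hq⟩
  simp only [good, build, canopy, canopyAux_ins A 1 d B hd, hp, hq, h0, true_and]
  have hl : (canopyAux 1 A).length = (canopyAux 1 L).length := by
    rw [canopyAux_length, canopyAux_length, hp.size_eq]
  simp only [canopyAux]
  rw [List.append_eq_append_iff_of_size_eq_left hl]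
  refine and_congr_right fun _ => ?_
  cases R with
  | leaf =>
    have := size_zero hq.size_eq
    subst this
    simp [lb] at hd
    subst hd
    simp [canopyAux, nd, lb]
  | node l r =>
    cases B with
    | leaf => have := hq.size_eq; simp [size] at this
    | node l' r' =>
      have e : canopyAux 0 (node l r) = canopyAux 1 (node l r) := rfl
      obtain ⟨t, ht⟩ := canopyAux_cons (node l r)
      rw [e]
      have : nd (node l' r') = lb (node l' r') := rfl
      rw [this]
      split_ifs with h
      · simp [h]
      · simp [h, ht]

theorem good_cases {p : BT × BT} (h : good p) : p = (leaf, leaf) ∨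
    ∃ p' q' d, good p' ∧ good q' ∧ d < nd q'.1 ∧ p = build p' q' d := by
  obtain ⟨T, T'⟩ := p
  cases T' with
  | leaf => left; exact Prod.ext (size_zero h.1.size_eq) rfl
  | node L R =>
    right
    obtain ⟨A, B, d, h1, h2, h3, h4⟩ := (tle_node_iff _ _ _).1 h.1
    simp only at h2
    subst h2
    have := (good_build_iff (p := (A, L)) (q := (B, R)) h1 h3 h4).1 h
    exact ⟨(A, L), (B, R), d, this.1, this.2.1, this.2.2, rfl⟩

theorem finite_size (n : ℕ) : {T : BT | T.size ≤ n}.Finite := by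
  induction n with
  | zero =>
    refine (Set.finite_singleton leaf).subset ?_
    intro T hT
    exact size_zero (Nat.le_zero.1 hT)
  | succ n ih =>
    refine ((Set.finite_singleton leaf).union (Set.Finite.image2 node ih ih)).subset ?_
    intro T hT
    cases T with
    | leaf => left; rfl
    | node l r =>
      right
      simp only [size, Set.mem_ofPred_eq] at hT
      exact ⟨l, by simp only [Set.mem_ofPred_eq]; omega, r,
        by simp only [Set.mem_ofPred_eq]; omega, rfl⟩

theorem finite_good (n : ℕ) : {p : BT × BT | good p ∧ p.1.size = n}.Finite := by
  refine ((finite_size n).prod (finite_size n)).subset ?_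
  rintro p ⟨h, rfl⟩
  exact ⟨le_refl p.1.size, h.1.size_eq.ge⟩

/-- The finite set of synchronized intervals of size `n`. -/
noncomputable def S (n : ℕ) : Finset (BT × BT) := (finite_good n).toFinset

theorem mem_S {n : ℕ} {p : BT × BT} : p ∈ S n ↔ good p ∧ p.1.size = n := by simp [S]

theorem S_zero : S 0 = {(leaf, leaf)} := by
  ext p
  rw [mem_S, Finset.mem_singleton]
  constructor
  · rintro ⟨h, h0⟩
    have h1 := size_zero h0
    have h2 := size_zero (h.1.size_eq ▸ h0)
    exact Prod.ext h1 h2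
  · rintro rfl
    exact ⟨good_leaf, rfl⟩

theorem sum_S_succ {M : Type*} [AddCommMonoid M] (f : BT × BT → M) (n : ℕ) :
    ∑ p ∈ S (n + 1), f p = ∑ mr ∈ Finset.HasAntidiagonal.antidiagonal n, ∑ p ∈ S mr.1, ∑ q ∈ S mr.2,
      ∑ d ∈ Finset.range (nd q.1), f (build p q d) := by
  have h1 : ∀ mr : ℕ × ℕ, ∑ p ∈ S mr.1, ∑ q ∈ S mr.2,
      ∑ d ∈ Finset.range (nd q.1), f (build p q d) =
      ∑ x ∈ (S mr.1 ×ˢ S mr.2).sigma (fun pq => Finset.range (nd pq.2.1)),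
        f (build x.1.1 x.1.2 x.2) := by
    intro mr
    rw [Finset.sum_sigma, Finset.sum_product]
  simp only [h1]
  rw [← Finset.sum_sigma (Finset.HasAntidiagonal.antidiagonal n)
    (fun mr => (S mr.1 ×ˢ S mr.2).sigma (fun pq => Finset.range (nd pq.2.1)))
    (fun y => f (build y.2.1.1 y.2.1.2 y.2.2))]
  symm
  refine Finset.sum_bij (fun y _ => build y.2.1.1 y.2.1.2 y.2.2) ?_ ?_ ?_ ?_
  · rintro ⟨⟨m, r⟩, ⟨p, q⟩, d⟩ h
    simp only [Finset.mem_sigma, Finset.HasAntidiagonal.mem_antidiagonal, Finset.mem_product, mem_S,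
      Finset.mem_range] at h ⊢
    obtain ⟨h1, ⟨⟨h2, h3⟩, h4, h5⟩, h6⟩ := h
    refine ⟨(good_build_iff (nd_le h6) h2.1 h4.1).2 ⟨h2, h4, h6⟩, ?_⟩
    simp only [build, size_ins _ _ _ (nd_le h6)]
    omega
  · rintro ⟨⟨m, r⟩, ⟨⟨A, L⟩, ⟨B, R⟩⟩, d⟩ h ⟨⟨m', r'⟩, ⟨⟨A', L'⟩, ⟨B', R'⟩⟩, d'⟩ h' e
    simp only [Finset.mem_sigma, Finset.HasAntidiagonal.mem_antidiagonal, Finset.mem_product, mem_S,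
      Finset.mem_range] at h h'
    obtain ⟨h1, ⟨⟨h2, h3⟩, h4, h5⟩, h6⟩ := h
    obtain ⟨h1', ⟨⟨h2', h3'⟩, h4', h5'⟩, h6'⟩ := h'
    simp only [build, Prod.mk.injEq, node.injEq] at e
    obtain ⟨e1, rfl, rfl⟩ := e
    have hs : A.size = A'.size := h2.1.size_eq.trans h2'.1.size_eq.symm
    obtain ⟨rfl, rfl, rfl⟩ := ins_inj hs d d' B B' (nd_le h6) (nd_le h6') e1
    subst h3 h5 h3' h5'
    rfl
  · intro p hp
    rw [mem_S] at hp
    obtain ⟨hp, hs⟩ := hp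
    rcases good_cases hp with rfl | ⟨p', q', d, h1, h2, h3, rfl⟩
    · simp [size] at hs
    · simp only [build, size_ins _ _ _ (nd_le h3)] at hs
      refine ⟨⟨(p'.1.size, q'.1.size), (p', q'), d⟩, ?_, rfl⟩
      simp only [Finset.mem_sigma, Finset.HasAntidiagonal.mem_antidiagonal, Finset.mem_product, mem_S,
        Finset.mem_range]
      exact ⟨by omega, ⟨⟨h1, trivial⟩, h2, trivial⟩, h3⟩
  · intros; rfl

/-- Number of zeros of the canopy. -/
def nv (T : BT) : ℕ := (canopy T).count 0

/-- Contribution of an inserted tree to the number of zeros. -/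
def nv' : BT → ℕ
  | leaf => 1
  | node l r => nv (node l r)

theorem nv_ins (A B : BT) (d : ℕ) (h : d < nd B) : nv (ins A B d) = nv A + nv' B := by
  unfold nv canopy
  rw [canopyAux_ins A 1 d B (nd_le h), List.count_append]
  cases B with
  | leaf => simp [lb, canopyAux, nv']
  | node l r =>
    have : nd (node l r) = lb (node l r) := rfl
    rw [if_pos (this ▸ h)]
    rfl

end BT
namespace BT

open Polynomial in
/-- Weight of an interval. -/
noncomputable def wt (p : BT × BT) : ℚ[X][X] := C (X ^ nv p.1) * X ^ lb p.1

/-- Generating function by size, zeros of the canopy and left branch length. -/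
noncomputable def FF : PowerSeries (Polynomial (Polynomial ℚ)) :=
  PowerSeries.mk fun n => ∑ p ∈ S n, wt p

/-- Generating function by size and zeros of the canopy. -/
noncomputable def FO : PowerSeries (Polynomial ℚ) :=
  PowerSeries.mk fun n => ∑ p ∈ S n, Polynomial.X ^ nv p.1

theorem map_FF : PowerSeries.map (Polynomial.evalRingHom 1) FF = FO := by
  ext1 n
  simp [FF, FO, wt]

open Polynomial in
theorem inner_sum (q : BT × BT) (hq : good q) :
    (X - 1 : ℚ[X][X]) * ∑ d ∈ Finset.range (nd q.1), C (X ^ nv' q.1) * X ^ d =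
      (if q.1.size = 0 then C X * (X - 1) else 0) + (wt q - C (X ^ nv q.1)) := by
  rw [← Finset.mul_sum]
  obtain ⟨B, R⟩ := q
  cases B with
  | leaf => simp [nd, nv', wt, nv, lb, size, canopy, canopyAux]; ring
  | node l r =>
    have h := mul_geom_sum (X : ℚ[X][X]) (nd (node l r))
    have e : nd (node l r) = lb (node l r) := rfl
    rw [e] at h
    rw [if_neg (by simp [size])]
    simp only [e, wt, nv']
    rw [mul_left_comm, h]
    ring

open Polynomial in
theorem wt_build (p q : BT × BT) (d : ℕ) (h : d < nd q.1) :
    wt (build p q d) = X * wt p * (C (X ^ nv' q.1) * X ^ d) := by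
  simp only [wt, build, nv_ins _ _ _ h, lb_ins _ _ _ (nd_le h), pow_add, map_mul]
  ring

theorem FF_eq : PowerSeries.C (Polynomial.X - 1) * FF = PowerSeries.C (Polynomial.X - 1) +
    PowerSeries.X * (PowerSeries.C Polynomial.X * FF *
      (PowerSeries.C (Polynomial.C Polynomial.X * (Polynomial.X - 1)) + FF -
        PowerSeries.map Polynomial.C FO)) := by
  ext1 n
  cases n with
  | zero =>
    simp [FF, S_zero, wt, nv, lb, canopy, canopyAux]
  | succ n =>
    rw [map_add, PowerSeries.coeff_succ_X_mul, PowerSeries.coeff_C_mul, PowerSeries.coeff_C,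
      if_neg (by omega), zero_add, mul_assoc, PowerSeries.coeff_C_mul, PowerSeries.coeff_mul]
    have h1 : PowerSeries.coeff (n + 1) FF = ∑ p ∈ S (n + 1), wt p := by
      rw [FF, PowerSeries.coeff_mk]
    rw [h1, sum_S_succ, Finset.mul_sum, Finset.mul_sum]
    refine Finset.sum_congr rfl fun mr _ => ?_
    have h2 : PowerSeries.coeff mr.2 (PowerSeries.C (Polynomial.C Polynomial.X *
        (Polynomial.X - 1)) + FF - PowerSeries.map Polynomial.C FO) =
        ∑ q ∈ S mr.2, (Polynomial.X - 1) * ∑ d ∈ Finset.range (nd q.1),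
          Polynomial.C (Polynomial.X ^ nv' q.1) * Polynomial.X ^ d := by
      rw [Finset.sum_congr rfl (fun q hq => inner_sum q (mem_S.1 hq).1), Finset.sum_add_distrib,
        Finset.sum_sub_distrib]
      have h3 : (∑ q ∈ S mr.2, if q.1.size = 0 then
          (Polynomial.C Polynomial.X * (Polynomial.X - 1) : Polynomial (Polynomial ℚ)) else 0) =
          PowerSeries.coeff mr.2 (PowerSeries.C (Polynomial.C Polynomial.X *
        (Polynomial.X - 1))) := by
        rw [PowerSeries.coeff_C]
        by_cases h : mr.2 = 0
        · simp [h, S_zero, size]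
        · rw [if_neg h]
          refine Finset.sum_eq_zero fun q hq => ?_
          rw [if_neg]
          rw [(mem_S.1 hq).2]; exact h
      rw [h3]
      simp [FF, FO]
      ring
    have h4 : PowerSeries.coeff mr.1 FF = ∑ p ∈ S mr.1, wt p := by
      rw [FF, PowerSeries.coeff_mk]
    rw [h2, h4, Finset.sum_mul, Finset.mul_sum, Finset.mul_sum]
    refine Finset.sum_congr rfl fun p _ => ?_
    rw [Finset.mul_sum, Finset.mul_sum, Finset.mul_sum]
    refine Finset.sum_congr rfl fun q _ => ?_
    rw [Finset.sum_congr rfl fun d hd => wt_build p q d (Finset.mem_range.1 hd), ← Finset.mul_sum]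
    ring

theorem coeff_FO (n j : ℕ) : (PowerSeries.coeff n FO).coeff j =
    ((Set.ncard {p : BT × BT | good p ∧ p.1.size = n ∧ nv p.1 = j} : ℕ) : ℚ) := by
  have : {p : BT × BT | good p ∧ p.1.size = n ∧ nv p.1 = j} =
      (((S n).filter fun p => nv p.1 = j : Finset (BT × BT)) : Set (BT × BT)) := by
    ext p
    simp [mem_S, and_assoc]
  rw [this, Set.ncard_coe_finset, FO, PowerSeries.coeff_mk, Polynomial.finsetSum_coeff,
    Finset.card_filter]
  simp [Polynomial.coeff_X_pow, eq_comm]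

end BT
namespace SyncAlg

open PowerSeries

variable {A : Type*} [CommRing A]

theorem eq_zero_of_dvd {a : PowerSeries A} (h : ∀ n, (X : PowerSeries A) ^ n ∣ a) : a = 0 := by
  ext1 n
  exact X_pow_dvd_iff.1 (h (n + 1)) n (Nat.lt_succ_self n)

theorem dvd_iff_quot (n : ℕ) (a b : PowerSeries A) : (X : PowerSeries A) ^ n ∣ a - b ↔
    Ideal.Quotient.mk (Ideal.span {(X : PowerSeries A) ^ n}) a =
      Ideal.Quotient.mk (Ideal.span {(X : PowerSeries A) ^ n}) b := by
  rw [Ideal.Quotient.eq, Ideal.mem_span_singleton]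

theorem exists_fix (T : PowerSeries A × PowerSeries A → PowerSeries A × PowerSeries A)
    (hT : ∀ n a b, X ^ n ∣ a.1 - b.1 → X ^ n ∣ a.2 - b.2 →
      X ^ (n + 1) ∣ (T a).1 - (T b).1 ∧ X ^ (n + 1) ∣ (T a).2 - (T b).2) :
    ∃ a, T a = a := by
  let s : ℕ → PowerSeries A × PowerSeries A := fun n => T^[n] (0, 0)
  have hs : ∀ n, s (n + 1) = T (s n) := fun n => Function.iterate_succ_apply' T n (0, 0)
  have h1 : ∀ n, X ^ n ∣ (s (n + 1)).1 - (s n).1 ∧ X ^ n ∣ (s (n + 1)).2 - (s n).2 := by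
    intro n
    induction n with
    | zero => simp
    | succ n ih => rw [hs (n + 1), hs n]; exact hT n _ _ (hs n ▸ ih.1) (hs n ▸ ih.2)
  have h2 : ∀ n k, X ^ n ∣ (s (n + k)).1 - (s n).1 ∧ X ^ n ∣ (s (n + k)).2 - (s n).2 := by
    intro n k
    induction k with
    | zero => simp
    | succ k ih =>
      have := h1 (n + k)
      constructor
      · have e := dvd_add ((pow_dvd_pow X (Nat.le_add_right n k)).trans this.1) ih.1
        rwa [sub_add_sub_cancel] at e
      · have e := dvd_add ((pow_dvd_pow X (Nat.le_add_right n k)).trans this.2) ih.2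
        rwa [sub_add_sub_cancel] at e
  let a : PowerSeries A × PowerSeries A :=
    (PowerSeries.mk fun n => coeff n (s (n + 1)).1, PowerSeries.mk fun n => coeff n (s (n + 1)).2)
  have h3 : ∀ n, X ^ n ∣ a.1 - (s n).1 ∧ X ^ n ∣ a.2 - (s n).2 := by
    intro n
    constructor
    · rw [X_pow_dvd_iff]
      intro m hm
      obtain ⟨k, rfl⟩ := Nat.exists_eq_add_of_le (Nat.succ_le_of_lt hm)
      have := X_pow_dvd_iff.1 (h2 (m + 1) k).1 m (Nat.lt_succ_self m)
      rw [map_sub, sub_eq_zero] at this ⊢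
      simp only [a, coeff_mk]
      exact this.symm
    · rw [X_pow_dvd_iff]
      intro m hm
      obtain ⟨k, rfl⟩ := Nat.exists_eq_add_of_le (Nat.succ_le_of_lt hm)
      have := X_pow_dvd_iff.1 (h2 (m + 1) k).2 m (Nat.lt_succ_self m)
      rw [map_sub, sub_eq_zero] at this ⊢
      simp only [a, coeff_mk]
      exact this.symm
  refine ⟨a, ?_⟩
  have h4 : ∀ n, X ^ n ∣ (T a).1 - a.1 ∧ X ^ n ∣ (T a).2 - a.2 := by
    intro n
    have e1 := hT n _ _ (h3 n).1 (h3 n).2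
    have e2 := h3 (n + 1)
    rw [hs n] at e2
    have e3 := dvd_sub e1.1 e2.1
    have e4 := dvd_sub e1.2 e2.2
    rw [sub_sub_sub_cancel_right] at e3 e4
    exact ⟨(pow_dvd_pow X (Nat.le_succ n)).trans e3, (pow_dvd_pow X (Nat.le_succ n)).trans e4⟩
  exact Prod.ext (sub_eq_zero.1 (eq_zero_of_dvd fun n => (h4 n).1))
    (sub_eq_zero.1 (eq_zero_of_dvd fun n => (h4 n).2))

theorem dvd_aux (n : ℕ) (c a b : PowerSeries A) (h : X ^ n ∣ a - b) :
    X ^ (n + 1) ∣ (c + X * a) - (c + X * b) := by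
  rw [add_sub_add_left_eq_sub, ← mul_sub, pow_succ']
  exact mul_dvd_mul_left X h

/-- The parametrization. -/
theorem exists_UV (v : PowerSeries A) : ∃ U V U' V' : PowerSeries A, U = X * U' ∧ V = X * V' ∧
    U * (1 - V) ^ 2 = X ∧ V * (1 - U) ^ 2 = X * v := by
  obtain ⟨⟨a, b⟩, h⟩ := exists_fix (fun p : PowerSeries A × PowerSeries A =>
    (1 + X * (2 * v * p.2 * p.1 - X * v ^ 2 * p.2 ^ 2 * p.1),
      1 + X * (2 * p.1 * p.2 - X * p.1 ^ 2 * p.2))) (by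
    intro n a b h1 h2
    refine ⟨dvd_aux n _ _ _ ?_, dvd_aux n _ _ _ ?_⟩
    all_goals
      rw [dvd_iff_quot] at h1 h2 ⊢
      simp only [map_sub, map_mul, map_pow, h1, h2])
  simp only [Prod.mk.injEq] at h
  refine ⟨X * a, X * (v * b), a, v * b, rfl, rfl, ?_, ?_⟩
  · linear_combination (-X) * h.1
  · linear_combination (-X * v) * h.2

theorem exists_N (c d : PowerSeries A) : ∃ N : PowerSeries A,
    N = 1 + X * c * N + X * d * N ^ 2 := by
  obtain ⟨⟨a, b⟩, h⟩ := exists_fix (fun p : PowerSeries A × PowerSeries A =>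
    (1 + X * (c * p.1 + d * p.1 ^ 2), 0)) (by
    intro n a b h1 h2
    refine ⟨dvd_aux n _ _ _ ?_, by simp⟩
    rw [dvd_iff_quot] at h1 h2 ⊢
    simp only [map_add, map_mul, map_pow, h1])
  simp only [Prod.mk.injEq] at h
  exact ⟨a, by linear_combination - h.1⟩

theorem isUnit_one_sub (V' : PowerSeries A) : IsUnit (1 - X * V') := by
  rw [PowerSeries.isUnit_iff_constantCoeff]
  simp

/-- Existence of a solution of the quadratic equation. -/
theorem exists_G (x v U V U' V' : PowerSeries A) (hU : U = X * U') (hV : V = X * V')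
    (h1 : U * (1 - V) ^ 2 = X) (h2 : V * (1 - U) ^ 2 = X * v) (P : PowerSeries A)
    (hP : P * (1 - V) ^ 2 = 1 - V - U * V) :
    ∃ G : PowerSeries A, (x - 1) * G = (x - 1) + X * (x * G * (v * (x - 1) + G - P)) := by
  obtain ⟨N, hN⟩ := exists_N (V' * (1 - U) * x) (U * V' * (1 - V) * x)
  have hN' : N = 1 + V * (1 - U) * x * N + U * V * (1 - V) * x * N ^ 2 := by
    rw [hV]
    rw [hV] at hN
    linear_combination hN
  obtain ⟨w, hw⟩ := (isUnit_one_sub V').exists_right_inv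
  rw [← hV] at hw
  refine ⟨w * (1 - V * N * (1 - (1 - U) * x)), ?_⟩
  have hu : IsUnit ((1 - V) ^ 2) := by
    rw [hV]; exact (isUnit_one_sub V').pow 2
  apply hu.mul_left_cancel
  set g := 1 - V * N * (1 - (1 - U) * x) with hg
  have hXP : X * P = U * (1 - V - U * V) := by
    rw [← hP, ← h1]; ring
  have key : (1 - V) * (x - 1) * g = (1 - V) ^ 2 * (x - 1) +
      (x * (1 - V) * g * (V * (1 - U) ^ 2 * (x - 1) - U * (1 - V - U * V))
        + x * U * (1 - V) ^ 2 * g ^ 2) := by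
    rw [hg]
    linear_combination (1 - V) * V * (1 - (1 - U) * x) ^ 2 * hN'
  have ht : (1 - V) * (w * g) = g := by rw [← mul_assoc, hw, one_mul]
  generalize w * g = t at ht ⊢
  rw [← ht] at key
  linear_combination key + x * (1 - V) ^ 2 * t * (x - 1) * h2 + x * (1 - V) ^ 2 * t * hXP
    + x * t ^ 2 * (1 - V) ^ 2 * h1

/-- Specialization of the catalytic variable at 1. -/
noncomputable abbrev ev (K : Type*) [CommRing K] :
    PowerSeries (Polynomial K) →+* PowerSeries K :=
  PowerSeries.map (Polynomial.evalRingHom 1)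

/-- Inclusion of series that do not depend on the catalytic variable. -/
noncomputable abbrev inc (K : Type*) [CommRing K] :
    PowerSeries K →+* PowerSeries (Polynomial K) :=
  PowerSeries.map Polynomial.C

theorem unique_sol {K : Type*} [CommRing K] [IsDomain K] (c : Polynomial K)
    (F G : PowerSeries (Polynomial K))
    (hF : C (Polynomial.X - 1) * F = C (Polynomial.X - 1) +
      X * (C Polynomial.X * F * (C c + F - inc K (ev K F))))
    (hG : C (Polynomial.X - 1) * G = C (Polynomial.X - 1) +
      X * (C Polynomial.X * G * (C c + G - inc K (ev K G)))) : F = G := by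
  have h : ∀ n, X ^ n ∣ F - G := by
    intro n
    induction n with
    | zero => simp
    | succ n ih =>
      obtain ⟨D, hD⟩ := ih
      have h1 : inc K (ev K F) - inc K (ev K G) = X ^ n * inc K (ev K D) := by
        rw [← map_sub, ← map_sub, hD]
        simp [inc, ev]
      have h2 : X ^ n * (C (Polynomial.X - 1) * D) = X ^ n * (X * (C Polynomial.X *
          (D * (C c + F - inc K (ev K F)) + G * (D - inc K (ev K D))))) := by
        linear_combination hF - hG - C (Polynomial.X - 1) * hD
          + X * C Polynomial.X * (C c + F - inc K (ev K F)) * hD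
          + X * C Polynomial.X * G * (hD - h1)
      have h3 := mul_left_cancel₀ (pow_ne_zero n PowerSeries.X_ne_zero) h2
      have h4 := congrArg constantCoeff h3
      have hx : (Polynomial.X - 1 : Polynomial K) ≠ 0 := by
        simpa using Polynomial.X_sub_C_ne_zero (1 : K)
      rw [map_mul, map_mul, constantCoeff_C, constantCoeff_X, zero_mul] at h4
      have h5 := (mul_eq_zero.1 h4).resolve_left hx
      rw [hD, pow_succ]
      exact mul_dvd_mul_left _ (X_dvd_iff.2 h5)
  exact sub_eq_zero.1 (eq_zero_of_dvd h)

theorem solve {K : Type*} [CommRing K] [IsDomain K] (v : K)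
    (F : PowerSeries (Polynomial K))
    (hF : C (Polynomial.X - 1) * F = C (Polynomial.X - 1) +
      X * (C Polynomial.X * F * (C (Polynomial.C v * (Polynomial.X - 1)) + F - inc K (ev K F))))
    (U V U' V' : PowerSeries K) (hU : U = X * U') (hV : V = X * V')
    (h1 : U * (1 - V) ^ 2 = X) (h2 : V * (1 - U) ^ 2 = X * C v) :
    ev K F * (1 - V) ^ 2 = 1 - V - U * V := by
  obtain ⟨w, hw⟩ := (isUnit_one_sub V').exists_right_inv
  rw [← hV] at hw
  set P := w ^ 2 * (1 - V - U * V) with hPd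
  have hP : P * (1 - V) ^ 2 = 1 - V - U * V := by
    rw [hPd]
    linear_combination ((1 - V) * w + 1) * (1 - V - U * V) * hw
  have iX : inc K X = X := by simp [inc]
  obtain ⟨G, hG⟩ := exists_G (C Polynomial.X) (C (Polynomial.C v)) (inc K U) (inc K V)
    (inc K U') (inc K V') (by rw [hU, map_mul, iX]) (by rw [hV, map_mul, iX])
    (by rw [← iX, ← h1]; simp)
    (by
      have := congrArg (inc K) h2
      rw [map_mul (inc K) X, iX] at this
      simpa using this) (inc K P)
    (by
      have := congrArg (inc K) hP
      simpa using this)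
  have hG' : C (Polynomial.X - 1) * G = C (Polynomial.X - 1) +
      X * (C Polynomial.X * G * (C (Polynomial.C v * (Polynomial.X - 1)) + G - inc K P)) := by
    have e : (C (Polynomial.X - 1 : Polynomial K)) = C Polynomial.X - 1 := by simp
    rw [map_mul, e]; exact hG
  have hei : ev K (inc K P) = P := by
    ext1 n; simp
  have hGP : ev K G = P := by
    have e := congrArg (ev K) hG'
    simp only [map_mul, map_add, map_sub, hei] at e
    simp only [ev, PowerSeries.map_C, PowerSeries.map_X, Polynomial.coe_evalRingHom,
      Polynomial.eval_X, map_one] at e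
    have e2 : X * (ev K G * (ev K G - P)) = 0 := by
      linear_combination - e
    have e3 := (mul_eq_zero.1 e2).resolve_left PowerSeries.X_ne_zero
    rcases mul_eq_zero.1 e3 with e4 | e4
    · exfalso
      have e5 := congrArg constantCoeff hG'
      rw [map_add, map_mul, map_mul, constantCoeff_C, constantCoeff_X, zero_mul, add_zero] at e5
      have hx : (Polynomial.X - 1 : Polynomial K) ≠ 0 := by
        simpa using Polynomial.X_sub_C_ne_zero (1 : K)
      have e6 : constantCoeff G = 1 := mul_left_cancel₀ hx (by rw [e5, mul_one])
      have e7 := congrArg constantCoeff e4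
      rw [ev, ← coeff_zero_eq_constantCoeff_apply, PowerSeries.coeff_map,
        coeff_zero_eq_constantCoeff_apply, e6] at e7
      simp at e7
    · exact sub_eq_zero.1 e4
  have hFG := unique_sol _ F G hF (by rw [hGP]; exact hG')
  rw [hFG, hGP, hP]

end SyncAlg
namespace SyncAlg

open PowerSeries

/-- Coefficient of `V ^ j` in `V ^ b * (1 - V) ^ (-p)`. -/
def mc (p j b : ℕ) : ℚ := if b ≤ j then (Nat.multichoose p (j - b) : ℚ) else 0

theorem mc_zero (p j : ℕ) : mc p j 0 = Nat.multichoose p j := by simp [mc]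

theorem mc_succ (p j b : ℕ) : mc p (j + 1) (b + 1) = mc p j b := by simp [mc]

theorem mc_lt {p j b : ℕ} (h : j < b) : mc p j b = 0 := by simp [mc, h]

theorem mc_pascal (p j b : ℕ) : mc (p + 1) j b - mc (p + 1) j (b + 1) = mc p j b := by
  rcases lt_trichotomy j b with h | rfl | h
  · rw [mc_lt h, mc_lt h, mc_lt (by omega), sub_zero]
  · rw [mc_lt (Nat.lt_succ_self j)]; simp [mc]
  · obtain ⟨k, rfl⟩ := Nat.exists_eq_add_of_lt h
    have e1 : b + k + 1 - b = k + 1 := by omega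
    have e2 : b + k + 1 - (b + 1) = k := by omega
    rw [mc, mc, mc, if_pos (by omega), if_pos (by omega), if_pos (by omega), e1, e2,
      Nat.multichoose_succ_succ]
    push_cast
    ring

theorem multichoose_rel (n k : ℕ) :
    (k + 1) * Nat.multichoose n (k + 1) = n * Nat.multichoose (n + 1) k := by
  rw [Nat.multichoose_eq, Nat.multichoose_eq]
  have e1 : n + (k + 1) - 1 = n + k := by omega
  have e2 : n + 1 + k - 1 = n + k := by omega
  have e3 : n + k - k = n := by omega
  have := Nat.choose_succ_right_eq (n + k) k
  rw [e3] at this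
  rw [e1, e2]
  linarith

theorem mc_rel (p j b : ℕ) : ((j : ℚ) - b) * mc p j b = p * mc (p + 1) j (b + 1) := by
  rcases lt_trichotomy j b with h | rfl | h
  · rw [mc_lt h, mc_lt (by omega), mul_zero, mul_zero]
  · rw [mc_lt (Nat.lt_succ_self j)]; simp
  · obtain ⟨k, rfl⟩ := Nat.exists_eq_add_of_lt h
    have e1 : b + k + 1 - b = k + 1 := by omega
    have e2 : b + k + 1 - (b + 1) = k := by omega
    have e := multichoose_rel p k
    rw [mc, mc, if_pos (by omega), if_pos (by omega), e1, e2]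
    have e' : ((k : ℚ) + 1) * (Nat.multichoose p (k + 1) : ℚ) =
      p * (Nat.multichoose (p + 1) k : ℚ) := by exact_mod_cast e
    push_cast
    linear_combination e'

/-- The series with coefficient `e i j` at `u ^ i * v ^ j`, graded by `i + j`. -/
noncomputable def hom (e : ℕ → ℕ → ℚ) : PowerSeries (Polynomial ℚ) :=
  PowerSeries.mk fun n => ∑ j ∈ Finset.range (n + 1), Polynomial.monomial j (e (n - j) j)

theorem coeff_hom (e : ℕ → ℕ → ℚ) (n j : ℕ) :
    (coeff n (hom e)).coeff j = if j ≤ n then e (n - j) j else 0 := by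
  rw [hom, coeff_mk, Polynomial.finsetSum_coeff]
  simp only [Polynomial.coeff_monomial, Finset.sum_ite_eq', Finset.mem_range, Nat.lt_succ_iff]

theorem ext2 {a b : PowerSeries (Polynomial ℚ)}
    (h : ∀ n j, (coeff n a).coeff j = (coeff n b).coeff j) : a = b := by
  ext1 n
  ext1 j
  exact h n j

theorem X_mul_hom (e : ℕ → ℕ → ℚ) :
    X * hom e = hom (fun i j => if i = 0 then 0 else e (i - 1) j) := by
  apply ext2
  intro n j
  rw [coeff_hom]
  cases n with
  | zero => simp
  | succ n =>
    rw [coeff_succ_X_mul, coeff_hom]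
    by_cases h : j ≤ n
    · rw [if_pos h, if_pos (by omega), if_neg (by omega)]
      congr 1; omega
    · rw [if_neg h]
      by_cases h' : j ≤ n + 1
      · rw [if_pos h', if_pos (by omega)]
      · rw [if_neg h']

theorem Xv_mul_hom (e : ℕ → ℕ → ℚ) : X * C Polynomial.X * hom e =
    hom (fun i j => if j = 0 then 0 else e i (j - 1)) := by
  apply ext2
  intro n j
  rw [coeff_hom, mul_assoc]
  cases n with
  | zero =>
    rw [coeff_zero_X_mul]
    by_cases h : j = 0 <;> simp [h]
  | succ n =>
    rw [coeff_succ_X_mul, coeff_C_mul]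
    cases j with
    | zero => simp
    | succ j =>
      rw [Polynomial.coeff_X_mul, coeff_hom]
      simp

/-- Coefficients of `U ^ a * V ^ b` times a fixed series. -/
def hc (a b i j : ℕ) : ℚ := mc (2 * i + 1) j b * mc (2 * j + 1) i a

/-- The corresponding series. -/
noncomputable def H (a b : ℕ) : PowerSeries (Polynomial ℚ) := hom (hc a b)

theorem coeff_H (a b n j : ℕ) :
    (coeff n (H a b)).coeff j = if j ≤ n then hc a b (n - j) j else 0 := coeff_hom _ _ _

theorem H_rel1 (a b : ℕ) :
    X * H a b = H (a + 1) b - 2 * H (a + 1) (b + 1) + H (a + 1) (b + 2) := by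
  rw [H, X_mul_hom, two_mul]
  apply ext2
  intro n j
  simp only [map_add, map_sub, Polynomial.coeff_add, Polynomial.coeff_sub, coeff_H, coeff_hom]
  split_ifs with h1 h2
  · simp [hc, h2, mc_lt]
  · obtain ⟨k, hk⟩ := Nat.exists_eq_succ_of_ne_zero h2
    rw [hk]
    simp only [hc, Nat.succ_eq_add_one, mc_succ, Nat.add_sub_cancel]
    have e1 := mc_pascal (2 * k + 2) j b
    have e2 := mc_pascal (2 * k + 2) j (b + 1)
    have e3 := mc_pascal (2 * k + 1) j b
    have e : 2 * (k + 1) + 1 = 2 * k + 2 + 1 := by ring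
    rw [e]
    linear_combination mc (2 * j + 1) k a * (e2 - e1 - e3)
  · simp

theorem H_rel2 (a b : ℕ) : X * C Polynomial.X * H a b =
    H a (b + 1) - 2 * H (a + 1) (b + 1) + H (a + 2) (b + 1) := by
  rw [H, Xv_mul_hom, two_mul]
  apply ext2
  intro n j
  simp only [map_add, map_sub, Polynomial.coeff_add, Polynomial.coeff_sub, coeff_H, coeff_hom]
  split_ifs with h1 h2
  · simp [hc, h2, mc_lt]
  · obtain ⟨k, hk⟩ := Nat.exists_eq_succ_of_ne_zero h2
    rw [hk]
    simp only [hc, Nat.succ_eq_add_one, mc_succ, Nat.add_sub_cancel]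
    generalize n - (k + 1) = i
    have e1 := mc_pascal (2 * k + 2) i a
    have e2 := mc_pascal (2 * k + 2) i (a + 1)
    have e3 := mc_pascal (2 * k + 1) i a
    have e : 2 * (k + 1) + 1 = 2 * k + 2 + 1 := by ring
    rw [e]
    linear_combination mc (2 * i + 1) k b * (e2 - e1 - e3)
  · simp

theorem H_dvd (a b : ℕ) : X ^ (a + b) ∣ H a b := by
  rw [X_pow_dvd_iff]
  intro n hn
  ext1 j
  rw [coeff_H]
  split_ifs with h
  · rw [hc]
    by_cases hj : j < b
    · simp [mc_lt hj]
    · rw [mc_lt (b := a) (by omega)]; simp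
  · simp

theorem H_corner (a b i j : ℕ) : hc a b i j - hc (a + 1) b i j - hc a (b + 1) i j
    + hc (a + 1) (b + 1) i j = mc (2 * i) j b * mc (2 * j) i a := by
  rw [← mc_pascal (2 * i), ← mc_pascal (2 * j)]
  simp only [hc]
  ring

theorem H_one : H 0 0 - H 1 0 - H 0 1 + H 1 1 - 4 * H 1 1 = 1 := by
  have e4 : (4 : PowerSeries (Polynomial ℚ)) * H 1 1 = H 1 1 + H 1 1 + H 1 1 + H 1 1 := by ring
  rw [e4]
  apply ext2
  intro n j
  simp only [map_add, map_sub, Polynomial.coeff_add, Polynomial.coeff_sub, coeff_H]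
  by_cases h : j ≤ n
  · obtain ⟨i, rfl⟩ := Nat.exists_eq_add_of_le h
    simp only [if_pos h, Nat.add_sub_cancel_left]
    have e := H_corner 0 0 i j
    simp only [zero_add] at e
    rw [e]
    cases i with
    | zero =>
      cases j with
      | zero => simp [mc, hc]
      | succ j => simp [mc, hc, coeff_one]
    | succ i =>
      cases j with
      | zero => simp [mc, hc, coeff_one]
      | succ j =>
        have r1 := mc_rel (2 * (i + 1)) (j + 1) 0
        have r2 := mc_rel (2 * (j + 1)) (i + 1) 0
        rw [coeff_one, if_neg (by omega)]
        simp only [hc, Polynomial.coeff_zero]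
        push_cast at r1 r2
        simp only [sub_zero] at r1 r2
        have hi : (i : ℚ) + 1 ≠ 0 := by positivity
        have hj : (j : ℚ) + 1 ≠ 0 := by positivity
        apply mul_left_cancel₀ (mul_ne_zero hi hj)
        generalize mc (2 * (i + 1)) (j + 1) 0 = A at *
        generalize mc (2 * (j + 1)) (i + 1) 0 = B at *
        linear_combination B * (i + 1) * r1 + 2 * (i + 1) * mc (2 * (i + 1) + 1) (j + 1) 1 * r2
  · simp only [if_neg h, coeff_one]
    by_cases hn : n = 0
    · rw [if_pos hn, Polynomial.coeff_one, if_neg (by omega)]; simp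
    · rw [if_neg hn]; simp

theorem H_eq (U V U' V' : PowerSeries (Polynomial ℚ)) (hU : U = X * U') (hV : V = X * V')
    (h1 : U * (1 - V) ^ 2 = X) (h2 : V * (1 - U) ^ 2 = X * C Polynomial.X) (a b : ℕ) :
    H a b = U ^ a * V ^ b * H 0 0 := by
  have key : ∀ N a b, X ^ N ∣ H a b - U ^ a * V ^ b * H 0 0 := by
    intro N
    induction N with
    | zero => simp
    | succ N ih =>
      have h : ∀ k a b, N + 1 ≤ a + b + k → X ^ (N + 1) ∣ H a b - U ^ a * V ^ b * H 0 0 := by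
        intro k
        induction k with
        | zero =>
          intro a b hab
          have d1 : X ^ a ∣ U ^ a := by rw [hU, mul_pow]; exact dvd_mul_right _ _
          have d2 : X ^ b ∣ V ^ b := by rw [hV, mul_pow]; exact dvd_mul_right _ _
          have d3 : X ^ (a + b) ∣ U ^ a * V ^ b * H 0 0 := by
            rw [pow_add]; exact Dvd.dvd.mul_right (mul_dvd_mul d1 d2) _
          exact (pow_dvd_pow X (by omega)).trans (dvd_sub (H_dvd a b) d3)
        | succ k ihk =>
          intro a b hab
          cases a with
          | succ a =>
            have e : H (a + 1) b - U ^ (a + 1) * V ^ b * H 0 0 =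
                X * (H a b - U ^ a * V ^ b * H 0 0)
                + 2 * (H (a + 1) (b + 1) - U ^ (a + 1) * V ^ (b + 1) * H 0 0)
                - (H (a + 1) (b + 2) - U ^ (a + 1) * V ^ (b + 2) * H 0 0) := by
              linear_combination - H_rel1 a b - U ^ a * V ^ b * H 0 0 * h1
            rw [e]
            refine dvd_sub (dvd_add ?_ (Dvd.dvd.mul_left (ihk _ _ (by omega)) _))
              (ihk _ _ (by omega))
            rw [pow_succ']
            exact mul_dvd_mul_left _ (ih a b)
          | zero =>
            cases b with
            | zero => simp
            | succ b =>
              have e : H 0 (b + 1) - U ^ 0 * V ^ (b + 1) * H 0 0 =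
                  X * (C Polynomial.X * (H 0 b - U ^ 0 * V ^ b * H 0 0))
                  + 2 * (H (0 + 1) (b + 1) - U ^ (0 + 1) * V ^ (b + 1) * H 0 0)
                  - (H (0 + 2) (b + 1) - U ^ (0 + 2) * V ^ (b + 1) * H 0 0) := by
                linear_combination - H_rel2 0 b - U ^ 0 * V ^ b * H 0 0 * h2
              rw [e]
              refine dvd_sub (dvd_add ?_ (Dvd.dvd.mul_left (ihk _ _ (by omega)) _))
                (ihk _ _ (by omega))
              rw [pow_succ']
              exact mul_dvd_mul_left _ (Dvd.dvd.mul_left (ih 0 b) _)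
      exact fun a b => h (N + 1) a b (by omega)
  exact sub_eq_zero.1 (eq_zero_of_dvd fun N => key N a b)

theorem UV_eq (U V U' V' : PowerSeries (Polynomial ℚ)) (hU : U = X * U') (hV : V = X * V')
    (h1 : U * (1 - V) ^ 2 = X) (h2 : V * (1 - U) ^ 2 = X * C Polynomial.X) :
    U * V * (1 - U - V) = X * (X * C Polynomial.X * H 0 0)
      - 5 * (H 2 2 - H 3 2 - H 2 3 + H 3 3) + 4 * H 3 3 := by
  have hH := H_eq U V U' V' hU hV h1 h2
  have ho := H_one
  rw [hH 2 2, hH 3 2, hH 2 3, hH 3 3]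
  rw [hH 1 0, hH 0 1, hH 1 1] at ho
  linear_combination (- U * V * (1 - U - V)) * ho + V * (1 - U) ^ 2 * H 0 0 * h1
    + X * H 0 0 * h2

theorem final_identity (a b : ℕ) :
    ((a : ℚ) + 1) * (b + 1) * (hc 0 0 a b - 5 * (mc (2 * (a + 1)) (b + 1) 2 *
      mc (2 * (b + 1)) (a + 1) 2) + 4 * hc 3 3 (a + 1) (b + 1)) =
      Nat.multichoose (2 * a + 2) b * Nat.multichoose (2 * b + 2) a := by
  simp only [hc, mc_succ]
  rw [← mc_zero, ← mc_zero]
  have aux : ∀ a b : ℕ, mc (2 * (a + 1)) b 1 = b * mc (2 * a + 1) b 0 / (2 * a + 1) ∧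
      mc (2 * (a + 1) + 1) b 2 = (b - 1) * b * mc (2 * a + 1) b 0 / ((2 * a + 1) * (2 * a + 2)) ∧
      mc (2 * a + 2) b 0 = mc (2 * a + 1) b 0 + b * mc (2 * a + 1) b 0 / (2 * a + 1) := by
    intro a b
    have r1 := mc_rel (2 * a + 1) b 0
    have r2 := mc_rel (2 * a + 1 + 1) b 1
    have r3 := mc_pascal (2 * a + 1) b 0
    have p1 : (2 * a + 1 : ℚ) ≠ 0 := by positivity
    have p2 : (2 * a + 2 : ℚ) ≠ 0 := by positivity
    push_cast at r1 r2
    have e1 : mc (2 * a + 1 + 1) b 1 = b * mc (2 * a + 1) b 0 / (2 * a + 1) := by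
      rw [eq_div_iff p1]
      linear_combination - r1
    refine ⟨e1, ?_, ?_⟩
    · rw [e1] at r2
      have e2 : 2 * (a + 1) + 1 = 2 * a + 1 + 1 + 1 := by ring
      rw [e2, eq_div_iff (mul_ne_zero p1 p2)]
      field_simp at r2
      linear_combination - r2
    · simp only [zero_add] at r3
      rw [← e1]
      linear_combination r3
  obtain ⟨a1, a2, a3⟩ := aux a b
  obtain ⟨b1, b2, b3⟩ := aux b a
  rw [a1, a2, a3, b1, b2, b3]
  have p1 : (2 * a + 1 : ℚ) ≠ 0 := by positivity
  have p2 : (2 * a + 2 : ℚ) ≠ 0 := by positivity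
  have q1 : (2 * b + 1 : ℚ) ≠ 0 := by positivity
  have q2 : (2 * b + 2 : ℚ) ≠ 0 := by positivity
  field_simp
  ring

end SyncAlg
theorem BT.set_eq (i j : ℕ) (hi : 1 ≤ i) (hj : 1 ≤ j) :
    {p : BT × BT | BT.isInt p ∧ BT.synced p ∧
        (BT.canopy p.1).count 1 = i ∧ (BT.canopy p.1).count 0 = j} =
    {p : BT × BT | BT.good p ∧ p.1.size = i + j - 1 ∧ BT.nv p.1 = j} := by
  ext p
  have h := BT.canopyAux_count 1 p.1 (by simp)
  simp only [Set.mem_ofPred_eq, BT.isInt, BT.synced, BT.good, BT.nv, BT.canopy]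
  constructor
  · rintro ⟨⟨_, h2⟩, h3, h4, h5⟩
    exact ⟨⟨h2, h3⟩, by omega, h5⟩
  · rintro ⟨⟨h2, h3⟩, h4, h5⟩
    exact ⟨⟨BT.tle.size_eq h2, h2⟩, h3, by omega, h5⟩

open PowerSeries in
theorem BT.count_formula (a b : ℕ) :
    ((Set.ncard {p : BT × BT | BT.good p ∧ p.1.size = a + b + 1 ∧ BT.nv p.1 = b + 1} : ℕ) : ℚ) =
      SyncAlg.hc 0 0 a b - 5 * (SyncAlg.mc (2 * (a + 1)) (b + 1) 2 *
      SyncAlg.mc (2 * (b + 1)) (a + 1) 2) + 4 * SyncAlg.hc 3 3 (a + 1) (b + 1) := by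
  obtain ⟨U, V, U', V', hU, hV, h1, h2⟩ := SyncAlg.exists_UV (C (Polynomial.X : Polynomial ℚ))
  have hs := SyncAlg.solve (Polynomial.X : Polynomial ℚ) BT.FF
    (by rw [SyncAlg.ev, BT.map_FF]; exact BT.FF_eq) U V U' V' hU hV h1 h2
  rw [SyncAlg.ev, BT.map_FF] at hs
  have h3 : X * (BT.FO - 1) = U * V * (1 - U - V) := by
    rw [← h1]
    linear_combination U * hs
  rw [SyncAlg.UV_eq U V U' V' hU hV h1 h2] at h3
  have h4 := congrArg (fun f => (coeff (a + b + 1 + 1) f).coeff (b + 1)) h3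
  have e5 : (5 : PowerSeries (Polynomial ℚ)) = C (Polynomial.C 5) := by
    rw [map_ofNat, map_ofNat]
  have e4 : (4 : PowerSeries (Polynomial ℚ)) = C (Polynomial.C 4) := by
    rw [map_ofNat, map_ofNat]
  rw [e4, e5] at h4
  simp only [map_add, map_sub, coeff_succ_X_mul, mul_assoc, coeff_C_mul, Polynomial.coeff_add,
    Polynomial.coeff_sub, Polynomial.coeff_C_mul, Polynomial.coeff_X_mul, SyncAlg.coeff_H,
    BT.coeff_FO] at h4
  rw [coeff_one, if_neg (by omega), Polynomial.coeff_zero, sub_zero] at h4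
  have c1 : b ≤ a + b := by omega
  have c2 : b + 1 ≤ a + b + 1 + 1 := by omega
  simp only [if_pos c1, if_pos c2] at h4
  have e1 : a + b - b = a := by omega
  have e2 : a + b + 1 + 1 - (b + 1) = a + 1 := by omega
  rw [h4, e1, e2, ← SyncAlg.H_corner]

theorem count_synchronized_intervals_bivariate (i j : ℕ) (hi : 1 ≤ i) (hj : 1 ≤ j) :
    i * j * Set.ncard {p : BT × BT | BT.isInt p ∧ BT.synced p ∧
        (BT.canopy p.1).count 1 = i ∧ (BT.canopy p.1).count 0 = j} =
      Nat.choose (2 * i + j - 2) (j - 1) * Nat.choose (2 * j + i - 2) (i - 1) := by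
  rw [BT.set_eq i j hi hj]
  obtain ⟨a, rfl⟩ := Nat.exists_eq_add_of_le' hi
  obtain ⟨b, rfl⟩ := Nat.exists_eq_add_of_le' hj
  have e1 : a + 1 + (b + 1) - 1 = a + b + 1 := by omega
  have e2 : 2 * (a + 1) + (b + 1) - 2 = 2 * a + 2 + b - 1 := by omega
  have e3 : 2 * (b + 1) + (a + 1) - 2 = 2 * b + 2 + a - 1 := by omega
  rw [e1, e2, e3, Nat.add_sub_cancel, Nat.add_sub_cancel, ← Nat.multichoose_eq,
    ← Nat.multichoose_eq]
  have h := SyncAlg.final_identity a b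
  rw [← BT.count_formula] at h
  exact_mod_cast h
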